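/- Let (Γ,·) be a group, (D,γ) a Γ-labelled complete digraph with no balanced cycle, and let U ⊆ V(D) be a non-empty subset that is inclusion-wise minimal with the property that |R_{D,γ}(U,u)| < |U| for every u ∈ U. Define an auxiliary digraph F on vertex set U with an arc (u,w) whenever |R_{D,γ}(U \ {u}, w)| ≥ |U|−1. Then every vertex of F has out-degree at least one, and for every arc (u,w) of F with w,u on a common directed cycle of F one has: if (u,w) ∈ A(F) and (w',u) is the next arc structure along a directed cycle v_0 v_1 … v_{ℓ−1} v_0 of F, then R_{D,γ}(U \ {v_{i−1}}, v_i) = R_{D,γ}(U \ {v_i}, v_{i+1}) · γ(v_{i+1}, v_i) for every i (indices mod ℓ). -/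

import Mathlib

/-!
The minimality of `U`, applied to `U \ {u}`, gives the out-degree claim; `U` is not a singleton
because the one-vertex path already gives one value.

For the relation, let `(u, w)` be an arc of `F`. Since `R(U \ {u}, w) ⊆ R(U, w)`
and the latter has at most `|U| - 1` elements, the two sets coincide and have exactly `|U| - 1`
elements (`pathEndVals_diff_eq`). Along a directed cycle of `F`, every path in `U \ {v_i}` ending
at `v_{i+1}` extends by the arc `(v_{i+1}, v_i)` (`image_mul_subset_pathEndVals`), so
`R(U \ {v_i}, v_{i+1}) · γ(v_{i+1}, v_i) ⊆ R(U, v_i) = R(U \ {v_{i-1}}, v_i)`. Right translation is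
injective, so both sides have `|U| - 1` elements and hence are equal.
-/

/-- The cumulative product of the arc-labels of the directed cycle
`c = [v₀, v₁, …, v_{ℓ-1}]` (with closing arc `(v_{ℓ-1}, v₀)`). -/
def cycleProd {V Γ : Type} [Monoid Γ] (γ : V → V → Γ) (c : List V) : Γ :=
  ((c.zip (c.rotate 1)).map fun e => γ e.1 e.2).prod

/-- `c` is a directed cycle of the complete digraph (a list of at least two
pairwise distinct vertices) which is balanced with respect to `γ`. -/
def IsBalancedCycle {V Γ : Type} [Monoid Γ] (γ : V → V → Γ) (c : List V) : Prop :=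
  2 ≤ c.length ∧ c.Nodup ∧ cycleProd γ c = 1

/-- The cumulative product of the arc-labels along the directed path given by the
list of vertices `p` (a single-vertex path has value `1`). -/
def pathProd {V Γ : Type} [Monoid Γ] (γ : V → V → Γ) (p : List V) : Γ :=
  ((p.zip p.tail).map fun e => γ e.1 e.2).prod

/-- `R_{D,γ}(X, x)`: the set of `γ`-values of directed paths inside `X`
ending at `x` (including the single-vertex path at `x`). -/
def pathEndVals {V Γ : Type} [Monoid Γ] (γ : V → V → Γ) (X : Set V) (x : V) : Set Γ :=
  {g | ∃ p : List V, p ≠ [] ∧ p.Nodup ∧ (∀ w ∈ p, w ∈ X) ∧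
        p.getLast? = some x ∧ pathProd γ p = g}

theorem pathProd_append_singleton {V Γ : Type} [Monoid Γ] (γ : V → V → Γ) (v x : V) :
    ∀ p : List V, p.getLast? = some x → pathProd γ (p ++ [v]) = pathProd γ p * γ x v
  | [], h => by simp at h
  | [a], h => by
    obtain rfl : a = x := by simpa using h
    simp [pathProd]
  | a :: b :: l, h => by
    have ih := pathProd_append_singleton γ v x (b :: l) (by simpa using h)
    simp only [pathProd, List.cons_append, List.tail_cons, List.zip_cons_cons, List.map_cons,
      List.prod_cons] at ih ⊢
    rw [ih, mul_assoc]

theorem pathEndVals_mono {V Γ : Type} [Monoid Γ] (γ : V → V → Γ) {X Y : Set V} (h : X ⊆ Y)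
    (x : V) : pathEndVals γ X x ⊆ pathEndVals γ Y x := by
  rintro g ⟨p, hne, hnd, hp, hl, hg⟩
  exact ⟨p, hne, hnd, fun w hw => h (hp w hw), hl, hg⟩

theorem image_mul_subset_pathEndVals {V Γ : Type} [Monoid Γ] (γ : V → V → Γ) {U : Set V} {v : V}
    (hv : v ∈ U) (x : V) :
    (fun s => s * γ x v) '' pathEndVals γ (U \ {v}) x ⊆ pathEndVals γ U v := by
  rintro _ ⟨_, ⟨p, -, hnd, hp, hl, rfl⟩, rfl⟩
  refine ⟨p ++ [v], by simp, ?_, ?_, by simp, pathProd_append_singleton γ v x p hl⟩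
  · rw [List.nodup_append]
    refine ⟨hnd, by simp, fun a ha b hb => ?_⟩
    rw [List.mem_singleton.1 hb]
    exact (hp a ha).2
  · intro w hw
    rcases List.mem_append.1 hw with hw | hw
    · exact (hp w hw).1
    · rwa [List.mem_singleton.1 hw]

/-- Deleting the tail `u` of an arc `(u, w)` of `F` does not change the set of values of paths
ending at `w`. -/
theorem pathEndVals_diff_eq {V Γ : Type} [Monoid Γ] [Finite Γ] (γ : V → V → Γ) {U : Set V}
    {u w : V} (hw : (pathEndVals γ U w).ncard < U.ncard)
    (h : U.ncard - 1 ≤ (pathEndVals γ (U \ {u}) w).ncard) :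
    pathEndVals γ (U \ {u}) w = pathEndVals γ U w :=
  Set.eq_of_subset_of_ncard_le (pathEndVals_mono γ Set.sdiff_subset w) (by omega)
    (Set.toFinite _)

/-- Let `(D, γ)` be a `Γ`-labelled complete digraph with no balanced
cycle and let `U` be a non-empty set of vertices, inclusion-wise minimal with the
property that `|R_{D,γ}(U, u)| < |U|` for every `u ∈ U`. Consider the auxiliary
digraph `F` on `U` with an arc `(u, w)` whenever `|R_{D,γ}(U \ {u}, w)| ≥ |U| - 1`.
Then every vertex of `F` has out-degree at least one, and along every directed cycle
`v₀ v₁ … v_{ℓ-1} v₀` of `F` (here `ℓ = m + 2 ≥ 2`, with the vertices given by an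
injective map `c : Fin (m+2) → V` into `U` and consecutive pairs joined by arcs
of `F`) one has `R_{D,γ}(U \ {v_{i-1}}, v_i) = R_{D,γ}(U \ {v_i}, v_{i+1}) · γ(v_{i+1}, v_i)`
for every index `i` (taken modulo `ℓ`). -/
theorem auxiliary_digraph_cycle_relation {Γ V : Type} [Group Γ] [Fintype Γ]
    [Fintype V] [DecidableEq V]
    (γ : V → V → Γ)
    (hbal : ¬ ∃ c : List V, IsBalancedCycle γ c)
    (U : Set V) (hUne : U.Nonempty)
    (hU : ∀ u ∈ U, (pathEndVals γ U u).ncard < U.ncard)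
    (hmin : ∀ W : Set V, W ⊂ U → W.Nonempty →
      ∃ w ∈ W, W.ncard ≤ (pathEndVals γ W w).ncard) :
    (∀ u ∈ U, ∃ w ∈ U,
        U.ncard - 1 ≤ (pathEndVals γ (U \ {u}) w).ncard) ∧
    ∀ (m : ℕ) (c : Fin (m + 2) → V),
      Function.Injective c → (∀ i, c i ∈ U) →
      (∀ i : Fin (m + 2),
        U.ncard - 1 ≤ (pathEndVals γ (U \ {c i}) (c (i + 1))).ncard) →
      ∀ i : Fin (m + 2),
        pathEndVals γ (U \ {c (i - 1)}) (c i) =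
          (fun s => s * γ (c (i + 1)) (c i)) ''
            pathEndVals γ (U \ {c i}) (c (i + 1)) := by
  refine ⟨fun u hu => ?_, fun m c hinj hcU harc i => ?_⟩
  · have hne : (U \ {u}).Nonempty := by
      rw [Set.nonempty_iff_ne_empty]
      intro hempty
      have hle : U.ncard ≤ 1 := by
        simpa using Set.ncard_le_ncard (Set.sdiff_eq_empty.1 hempty)
      have hpos : 0 < (pathEndVals γ U u).ncard :=
        (Set.ncard_pos (Set.toFinite _)).2
          ⟨1, [u], by simp, by simp, by simpa using hu, by simp, by simp [pathProd]⟩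
      have := hU u hu
      omega
    obtain ⟨w, hw, hcard⟩ := hmin (U \ {u}) (Set.sdiff_singleton_ssubset.2 hu) hne
    exact ⟨w, hw.1, by rwa [Set.ncard_sdiff_singleton_of_mem hu] at hcard⟩
  · have hprev := harc (i - 1)
    rw [sub_add_cancel] at hprev
    rw [pathEndVals_diff_eq γ (hU _ (hcU i)) hprev]
    refine (Set.eq_of_subset_of_ncard_le (image_mul_subset_pathEndVals γ (hcU i) _) ?_
      (Set.toFinite _)).symm
    rw [Set.ncard_image_of_injective _ (mul_left_injective _)]
    have h₁ := hU _ (hcU i)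
    have h₂ := harc i
    omega
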